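/- Let n ≥ 1, let H : ℝ^{2n} → ℝ be smooth, let β ∈ ℝ, and let μ₀ : C_c^∞(ℝ^{2n}) → ℂ be a ℂ-linear functional (no continuity assumed) satisfying the static classical KMS condition μ₀({f, g} − β·g·{f, H}) = 0 for all f, g ∈ C_c^∞(ℝ^{2n}). Then there exists a constant c ∈ ℂ such that μ₀(f) = c ∫_{ℝ^{2n}} e^{−βH(x)} f(x) d^{2n}x for all f ∈ C_c^∞(ℝ^{2n}). -/

import Mathlib

open MeasureTheory

/-- The `i`-th partial derivative of a function on `ℝᵐ` (modeled as Euclidean space). -/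
noncomputable def partialDeriv {m : ℕ} (f : EuclideanSpace ℝ (Fin m) → ℂ) (i : Fin m) :
    EuclideanSpace ℝ (Fin m) → ℂ :=
  fun x => fderiv ℝ f x (EuclideanSpace.single i 1)

/-- The standard Poisson bracket on `ℝ^{2n}`:
`{f, g} = Σ_{k<n} (∂f/∂x_k ∂g/∂x_{n+k} − ∂f/∂x_{n+k} ∂g/∂x_k)`. -/
noncomputable def poissonBracket {n : ℕ} (f g : EuclideanSpace ℝ (Fin (2 * n)) → ℂ) :
    EuclideanSpace ℝ (Fin (2 * n)) → ℂ :=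
  fun x => ∑ k : Fin n,
    (partialDeriv f ⟨k.1, by have := k.isLt; omega⟩ x *
        partialDeriv g ⟨n + k.1, by have := k.isLt; omega⟩ x -
      partialDeriv f ⟨n + k.1, by have := k.isLt; omega⟩ x *
        partialDeriv g ⟨k.1, by have := k.isLt; omega⟩ x)

/-- `C_c^∞(ℝ^{2n})`: smooth compactly supported complex-valued functions on `ℝ^{2n}`. -/
noncomputable def TestFunctions2 (n : ℕ) :
    Submodule ℂ (EuclideanSpace ℝ (Fin (2 * n)) → ℂ) where
  carrier := {f | ContDiff ℝ (⊤ : ℕ∞) f ∧ HasCompactSupport f}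
  add_mem' := fun hf hg => ⟨hf.1.add hg.1, hf.2.add hg.2⟩
  zero_mem' := ⟨contDiff_const, HasCompactSupport.zero⟩
  smul_mem' := fun c f hf => ⟨hf.1.const_smul c,
    IsCompact.of_isClosed_subset hf.2 (isClosed_tsupport _)
      (tsupport_smul_subset_right (fun _ => c) f)⟩

/-!
If `φ, ψ` are test functions and `s` is a smooth step from `0` to `1`, the fundamental theorem of
calculus along `t ↦ x - s(t) a` gives
`∫ ψ(a) (φ(x) - φ(x - a)) da = Σᵢ ∂ᵢ ∫∫ s'(t) aᵢ ψ(a) φ(x - s(t) a) dt da`,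
so `(∫ ψ) φ - ψ ⋆ φ` is a divergence of test functions. Since `ψ ⋆ φ = φ ⋆ ψ`, so is
`(∫ ψ) φ - (∫ φ) ψ`; hence a linear functional killing all partial derivatives of test functions
is a multiple of the integral, with no continuity needed.

By the KMS condition, `g ↦ μ(e^{βH} g)` kills all brackets `{f, g}` of test functions, because
`e^{βH} {f, g} = {f, e^{βH} g} - β e^{βH} g {f, H}`. Taking for `f` a coordinate function cut off
near the support of `g` turns `{f, g}` into any prescribed partial derivative of `g`.
-/

open Filter
open scoped ContDiff Convolution Topology

section ParametricIntegral

theorem integral_eq_one_convolution_comp_neg {Y F : Type*} [NormedAddCommGroup Y]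
    [MeasurableSpace Y] [NormedAddCommGroup F] [NormedSpace ℝ F] (g : Y → F) (μ : Measure Y) :
    ∫ y, g y ∂μ =
      ((fun _ => 1 : Y → ℝ) ⋆[ContinuousLinearMap.lsmul ℝ ℝ, μ] fun y => g (-y)) 0 := by
  simp [convolution_def]

theorem hasCompactSupport_comp_prodMk {P Y F : Type*} [TopologicalSpace P] [TopologicalSpace Y]
    [R1Space Y] [Zero F] {k : P × Y → F} (hc : HasCompactSupport k) (p : P) :
    HasCompactSupport fun y => k (p, y) :=
  .intro (hc.isCompact.image continuous_snd) fun _ hy =>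
    image_eq_zero_of_notMem_tsupport fun h => hy ⟨_, h, rfl⟩

theorem hasCompactSupport_integral_comp_prodMk {P Y F : Type*} [TopologicalSpace P] [R1Space P]
    [TopologicalSpace Y] [MeasurableSpace Y] [NormedAddCommGroup F] [NormedSpace ℝ F]
    {k : P × Y → F} (hc : HasCompactSupport k) (μ : Measure Y) :
    HasCompactSupport fun p => ∫ y, k (p, y) ∂μ :=
  .intro (hc.isCompact.image continuous_fst) fun _ hp =>
    integral_eq_zero_of_ae <| .of_forall fun _ =>
      image_eq_zero_of_notMem_tsupport fun h => hp ⟨_, h, rfl⟩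

variable {P Y F : Type*} [NormedAddCommGroup P] [NormedSpace ℝ P]
  [NormedAddCommGroup Y] [NormedSpace ℝ Y] [MeasurableSpace Y] [BorelSpace Y]
  [NormedAddCommGroup F] [NormedSpace ℝ F] {k : P × Y → F}

theorem contDiff_integral_comp_prodMk {n : ℕ∞} (hk : ContDiff ℝ n k) (hc : HasCompactSupport k)
    (μ : Measure Y) [IsLocallyFiniteMeasure μ] : ContDiff ℝ n fun p => ∫ y, k (p, y) ∂μ := by
  simp_rw [integral_eq_one_convolution_comp_neg _ μ]
  have hk' : ContDiff ℝ n ↿(fun (p : P) (y : Y) => k (p, -y)) :=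
    hk.comp (contDiff_fst.prodMk contDiff_snd.neg)
  exact contDiffOn_univ.1 <| contDiffOn_convolution_right_with_param_comp _ contDiffOn_const
    isOpen_univ (hc.isCompact.image continuous_snd).neg
    (fun p y _ hy => image_eq_zero_of_notMem_tsupport fun h => hy ⟨_, h, rfl⟩)
    (locallyIntegrable_const _) hk'.contDiffOn

theorem fderiv_integral_comp_prodMk (hk : ContDiff ℝ 1 k) (hc : HasCompactSupport k)
    (μ : Measure Y) [IsLocallyFiniteMeasure μ] (p v : P) :
    fderiv ℝ (fun p => ∫ y, k (p, y) ∂μ) p v = ∫ y, fderiv ℝ k (p, y) (v, 0) ∂μ := by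
  let k' : P × Y → P →L[ℝ] F := fun q => fderiv ℝ k q ∘L .inl ℝ P Y
  have hk' : Continuous k' := (hk.continuous_fderiv one_ne_zero).clm_comp continuous_const
  have hk'c : HasCompactSupport k' :=
    (hc.fderiv (𝕜 := ℝ)).comp_left (g := (· ∘L .inl ℝ P Y)) (ContinuousLinearMap.zero_comp _)
  have integrable_k (p : P) : Integrable (fun y => k (p, y)) μ :=
    (hk.continuous.comp (.prodMk_right p)).integrable_of_hasCompactSupport
      (hasCompactSupport_comp_prodMk hc p)
  have integrable_k' (p : P) : Integrable (fun y => k' (p, y)) μ :=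
    (hk'.comp (.prodMk_right p)).integrable_of_hasCompactSupport
      (hasCompactSupport_comp_prodMk hk'c p)
  obtain ⟨C, hC⟩ := hk'c.exists_bound_of_continuous hk'
  have hK : IsCompact (Prod.snd '' tsupport k') := hk'c.isCompact.image continuous_snd
  have bound (q : P) (y : Y) :
      ‖k' (q, y)‖ ≤ (Prod.snd '' tsupport k').indicator (fun _ => C) y := by
    by_cases hy : y ∈ Prod.snd '' tsupport k'
    · simpa [Set.indicator_of_mem hy] using hC (q, y)
    · rw [image_eq_zero_of_notMem_tsupport fun h => hy ⟨_, h, rfl⟩, norm_zero,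
        Set.indicator_of_notMem hy]
  have key : HasFDerivAt (fun p => ∫ y, k (p, y) ∂μ) (∫ y, k' (p, y) ∂μ) p :=
    hasFDerivAt_integral_of_dominated_of_fderiv_le univ_mem
      (.of_forall fun q => (integrable_k q).aestronglyMeasurable) (integrable_k p)
      (integrable_k' p).aestronglyMeasurable (.of_forall fun y q _ => bound q y)
      ((integrable_indicator_iff hK.isClosed.measurableSet).2
        (integrableOn_const hK.measure_lt_top.ne))
      (.of_forall fun y q _ =>
        ((hk.differentiable one_ne_zero _).hasFDerivAt.comp q (hasFDerivAt_prodMk_left q y)))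
  rw [key.fderiv, ContinuousLinearMap.integral_apply (integrable_k' p)]
  simp [k']

end ParametricIntegral

section Transition

open Real

theorem deriv_smoothTransition_eq_zero {t : ℝ} (ht : t ∉ Set.Icc 0 1) :
    deriv smoothTransition t = 0 := by
  have const_near : ∃ c, smoothTransition =ᶠ[𝓝 t] fun _ => c := by
    rcases lt_or_gt_of_ne (show t ≠ 0 by rintro rfl; simp at ht) with h | h
    · exact ⟨0, (eventually_lt_nhds h).mono fun s hs => smoothTransition.zero_of_nonpos hs.le⟩
    · have h1 : 1 < t := by by_contra! h1; exact ht ⟨h.le, h1⟩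
      exact ⟨1, (eventually_gt_nhds h1).mono fun s hs => smoothTransition.one_of_one_le hs.le⟩
  obtain ⟨c, hc⟩ := const_near
  rw [hc.deriv_eq, deriv_const]

theorem hasCompactSupport_deriv_smoothTransition : HasCompactSupport (deriv smoothTransition) :=
  .intro isCompact_Icc fun _ => deriv_smoothTransition_eq_zero

theorem contDiff_deriv_smoothTransition : ContDiff ℝ ∞ (deriv smoothTransition) :=
  (smoothTransition.contDiff (n := ⊤)).iterate_deriv 1

variable {E F : Type*} [NormedAddCommGroup E] [NormedSpace ℝ E] [NormedAddCommGroup F]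
  [NormedSpace ℝ F] {φ : E → F}

theorem integrable_deriv_smoothTransition_smul_fderiv (hφ : ContDiff ℝ 1 φ) (x a : E) :
    Integrable fun t => deriv smoothTransition t • fderiv ℝ φ (x - smoothTransition t • a) a := by
  have := hφ.continuous_fderiv one_ne_zero
  have := smoothTransition.continuous
  have := contDiff_deriv_smoothTransition.continuous
  exact Continuous.integrable_of_hasCompactSupport (by fun_prop)
    hasCompactSupport_deriv_smoothTransition.smul_right

theorem integral_deriv_smoothTransition_smul_fderiv [CompleteSpace F] (hφ : ContDiff ℝ 1 φ)
    (x a : E) :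
    ∫ t, deriv smoothTransition t • fderiv ℝ φ (x - smoothTransition t • a) a =
      φ x - φ (x - a) := by
  have hderiv (t : ℝ) : HasDerivAt (fun t => -φ (x - smoothTransition t • a))
      (deriv smoothTransition t • fderiv ℝ φ (x - smoothTransition t • a) a) t := by
    have hs : HasDerivAt smoothTransition (deriv smoothTransition t) t :=
      (smoothTransition.contDiff (n := 1)).differentiable one_ne_zero t |>.hasDerivAt
    simpa using ((hφ.differentiable one_ne_zero _).hasFDerivAt.comp_hasDerivAt t
      ((hs.smul_const a).const_sub x)).fun_neg
  have hbot : Tendsto (fun t => -φ (x - smoothTransition t • a)) atBot (𝓝 (-φ x)) :=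
    tendsto_const_nhds.congr' <| (eventually_le_atBot 0).mono fun t ht => by
      simp [smoothTransition.zero_of_nonpos ht]
  have htop : Tendsto (fun t => -φ (x - smoothTransition t • a)) atTop (𝓝 (-φ (x - a))) :=
    tendsto_const_nhds.congr' <| (eventually_ge_atTop 1).mono fun t ht => by
      simp [smoothTransition.one_of_one_le ht]
  rw [integral_of_hasDerivAt_of_tendsto hderiv
    (integrable_deriv_smoothTransition_smul_fderiv hφ x a) hbot htop]
  abel

end Transition

section Homotopy

open Real

variable {E A : Type*} [NormedAddCommGroup E] [NormedSpace ℝ E] [NormedRing A] [NormedAlgebra ℝ A]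
  {c φ : E → A}

/-- The integrand `s'(t) c(a) φ(x - s(t) a)` of `homotopyOperator` at the point `(x, a, t)`. The
step `s = Real.smoothTransition` makes it smooth and compactly supported in `t` over all of `ℝ`, so
no boundary terms arise from the ends of the segment from `x` to `x - a`. -/
noncomputable def homotopyKernel (c φ : E → A) (p : E × E × ℝ) : A :=
  deriv smoothTransition p.2.2 • (c p.2.1 * φ (p.1 - smoothTransition p.2.2 • p.2.1))

theorem contDiff_homotopyKernel {n : ℕ∞} (hc : ContDiff ℝ n c) (hφ : ContDiff ℝ n φ) :
    ContDiff ℝ n (homotopyKernel c φ) := by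
  have : ContDiff ℝ n smoothTransition := smoothTransition.contDiff
  have : ContDiff ℝ n (deriv smoothTransition) :=
    contDiff_deriv_smoothTransition.of_le (mod_cast le_top)
  unfold homotopyKernel
  fun_prop

theorem hasCompactSupport_homotopyKernel (hc : HasCompactSupport c) (hφ : HasCompactSupport φ) :
    HasCompactSupport (homotopyKernel c φ) := by
  let shift : E × E × ℝ → E × E × ℝ := fun p => (p.1 + smoothTransition p.2.2 • p.2.1, p.2)
  have hshift : Continuous shift := by
    have := smoothTransition.continuous
    fun_prop
  have hK : IsCompact (tsupport φ ×ˢ tsupport c ×ˢ Set.Icc (0 : ℝ) 1) :=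
    hφ.isCompact.prod (hc.isCompact.prod isCompact_Icc)
  refine .intro (hK.image hshift) ?_
  rintro ⟨x, a, t⟩ hp
  by_contra hne
  have ht : t ∈ Set.Icc (0 : ℝ) 1 := by
    by_contra ht
    simp [homotopyKernel, deriv_smoothTransition_eq_zero ht] at hne
  have hmul : c a * φ (x - smoothTransition t • a) ≠ 0 := (smul_ne_zero_iff.1 hne).2
  exact hp ⟨(x - smoothTransition t • a, a, t),
    ⟨subset_tsupport φ (right_ne_zero_of_mul hmul), subset_tsupport c (left_ne_zero_of_mul hmul),
      ht⟩, by simp [shift]⟩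

theorem fderiv_homotopyKernel (hc : ContDiff ℝ 1 c) (hφ : ContDiff ℝ 1 φ) (x v : E) (q : E × ℝ) :
    fderiv ℝ (homotopyKernel c φ) (x, q) (v, 0) =
      homotopyKernel c (fun y => fderiv ℝ φ y v) (x, q) := by
  have hpartial : HasFDerivAt (fun y => homotopyKernel c φ (y, q))
      (deriv smoothTransition q.2 • (c q.1 • fderiv ℝ φ (x - smoothTransition q.2 • q.1))) x := by
    have := (hφ.differentiable one_ne_zero (x - smoothTransition q.2 • q.1)).hasFDerivAt.comp x
      ((hasFDerivAt_id x).sub_const (smoothTransition q.2 • q.1))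
    exact (this.const_mul (c q.1)).const_smul (deriv smoothTransition q.2)
  have hcomp := ((contDiff_homotopyKernel (n := 1) hc hφ).differentiable one_ne_zero
    (x, q)).hasFDerivAt.comp x (hasFDerivAt_prodMk_left (𝕜 := ℝ) x q)
  simpa [homotopyKernel] using DFunLike.congr_fun (hcomp.unique hpartial) v

theorem sum_homotopyKernel_coord_smul {ι : Type*} [Fintype ι] (b : Module.Basis ι ℝ E)
    (ψ : E → A) (x a : E) (t : ℝ) :
    ∑ i, homotopyKernel (fun a => b.coord i a • ψ a) (fun y => fderiv ℝ φ y (b i)) (x, a, t) =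
      ψ a * (deriv smoothTransition t • fderiv ℝ φ (x - smoothTransition t • a) a) := by
  have hrepr : fderiv ℝ φ (x - smoothTransition t • a) a =
      ∑ i, b.coord i a • fderiv ℝ φ (x - smoothTransition t • a) (b i) := by
    simp only [← map_smul, ← map_sum, b.coord_apply, b.sum_repr]
  simp only [hrepr, homotopyKernel, Finset.smul_sum, Finset.mul_sum, smul_mul_assoc,
    mul_smul_comm]

variable [MeasurableSpace E]

/-- The function `x ↦ ∫∫ s'(t) c(a) φ(x - s(t) a) dt da`. With `c(a) = aᵢ ψ(a)`, these are the
components of a compactly supported primitive of `(∫ ψ) φ - ψ ⋆ φ` for the divergence. -/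
noncomputable def homotopyOperator (μ : Measure E) (c φ : E → A) (x : E) : A :=
  ∫ q, homotopyKernel c φ (x, q) ∂μ.prod volume

theorem hasCompactSupport_homotopyOperator (μ : Measure E) (hc : HasCompactSupport c)
    (hφ : HasCompactSupport φ) :
    HasCompactSupport (homotopyOperator μ c φ) :=
  hasCompactSupport_integral_comp_prodMk (k := homotopyKernel c φ)
    (hasCompactSupport_homotopyKernel hc hφ) _

variable [BorelSpace E] {μ : Measure E} [IsLocallyFiniteMeasure μ]

theorem contDiff_homotopyOperator {n : ℕ∞} (hc : ContDiff ℝ n c) (hcc : HasCompactSupport c)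
    (hφ : ContDiff ℝ n φ) (hφc : HasCompactSupport φ) :
    ContDiff ℝ n (homotopyOperator μ c φ) :=
  contDiff_integral_comp_prodMk (contDiff_homotopyKernel hc hφ)
    (hasCompactSupport_homotopyKernel hcc hφc) _

theorem fderiv_homotopyOperator (hc : ContDiff ℝ 1 c) (hcc : HasCompactSupport c)
    (hφ : ContDiff ℝ 1 φ) (hφc : HasCompactSupport φ) (x v : E) :
    fderiv ℝ (homotopyOperator μ c φ) x v =
      homotopyOperator μ c (fun y => fderiv ℝ φ y v) x := by
  simp_rw [homotopyOperator, ← fderiv_homotopyKernel hc hφ]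
  exact fderiv_integral_comp_prodMk (contDiff_homotopyKernel (n := 1) hc hφ)
    (hasCompactSupport_homotopyKernel hcc hφc) _ x v

theorem integrable_homotopyKernel (hc : Continuous c)
    (hcc : HasCompactSupport c) (hφ : Continuous φ) (hφc : HasCompactSupport φ) (x : E) :
    Integrable (fun q => homotopyKernel c φ (x, q)) (μ.prod volume) :=
  ((contDiff_homotopyKernel (n := 0) (contDiff_zero.2 hc)
    (contDiff_zero.2 hφ)).continuous.comp (.prodMk_right x)).integrable_of_hasCompactSupport
    (hasCompactSupport_comp_prodMk (hasCompactSupport_homotopyKernel hcc hφc) x)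

theorem sum_fderiv_homotopyOperator [CompleteSpace A] {ι : Type*} [Fintype ι]
    (b : Module.Basis ι ℝ E) {ψ : E → A} (hψ : ContDiff ℝ 1 ψ) (hψc : HasCompactSupport ψ)
    (hφ : ContDiff ℝ 1 φ) (hφc : HasCompactSupport φ) (x : E) :
    ∑ i, fderiv ℝ (homotopyOperator μ (fun a => b.coord i a • ψ a) φ) x (b i) =
      ∫ a, ψ a * (φ x - φ (x - a)) ∂μ := by
  have : FiniteDimensional ℝ E := b.finiteDimensional_of_finite
  have hcoord (i : ι) : ContDiff ℝ 1 fun a => b.coord i a • ψ a :=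
    (b.coord i).toContinuousLinearMap.contDiff.smul hψ
  have hcoordc (i : ι) : HasCompactSupport fun a => b.coord i a • ψ a :=
    hψc.smul_left (f := b.coord i)
  have hint (i : ι) : Integrable (fun q => homotopyKernel (fun a => b.coord i a • ψ a)
      (fun y => fderiv ℝ φ y (b i)) (x, q)) (μ.prod volume) :=
    integrable_homotopyKernel (hcoord i).continuous (hcoordc i)
      ((hφ.continuous_fderiv one_ne_zero).clm_apply continuous_const)
      (hφc.fderiv_apply (𝕜 := ℝ) (b i)) x
  calc
    ∑ i, fderiv ℝ (homotopyOperator μ (fun a => b.coord i a • ψ a) φ) x (b i) =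
        ∑ i, ∫ q, homotopyKernel (fun a => b.coord i a • ψ a) (fun y => fderiv ℝ φ y (b i)) (x, q)
          ∂μ.prod volume :=
      Finset.sum_congr rfl fun i _ => fderiv_homotopyOperator (hcoord i) (hcoordc i) hφ hφc x (b i)
    _ = ∫ a, (∫ t, ψ a * (deriv smoothTransition t •
          fderiv ℝ φ (x - smoothTransition t • a) a)) ∂μ := by
      rw [← integral_finsetSum _ fun i _ => hint i,
        integral_prod _ (integrable_finsetSum _ fun i _ => hint i)]
      simp_rw [sum_homotopyKernel_coord_smul b ψ x]
    _ = ∫ a, ψ a * (φ x - φ (x - a)) ∂μ := by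
      simp_rw [fun a => integral_const_mul_of_integrable (c := ψ a)
        (integrable_deriv_smoothTransition_smul_fderiv hφ x a),
        integral_deriv_smoothTransition_smul_fderiv hφ]

end Homotopy

section Divergence

theorem integral_mul_comp_sub {G A : Type*} [AddCommGroup G] [MeasurableSpace G] [MeasurableAdd G]
    [MeasurableNeg G] [NormedCommRing A] [NormedSpace ℝ A] (φ ψ : G → A) (μ : Measure G)
    [μ.IsAddLeftInvariant] [μ.IsNegInvariant] (x : G) :
    ∫ a, ψ a * φ (x - a) ∂μ = ∫ a, φ a * ψ (x - a) ∂μ := by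
  rw [← integral_sub_left_eq_self _ μ x]
  simp only [sub_sub_cancel, mul_comm]

theorem integral_mul_sub_comp_sub {E A : Type*} [NormedAddCommGroup E] [MeasurableSpace E]
    [BorelSpace E] [NormedRing A] [NormedAlgebra ℝ A] {φ ψ : E → A} (hφ : Continuous φ)
    (hψ : Continuous ψ) (hψc : HasCompactSupport ψ) (μ : Measure E) [IsLocallyFiniteMeasure μ]
    (x : E) :
    ∫ a, ψ a * (φ x - φ (x - a)) ∂μ = (∫ a, ψ a ∂μ) * φ x - ∫ a, ψ a * φ (x - a) ∂μ := by
  have hint : Integrable ψ μ := hψ.integrable_of_hasCompactSupport hψc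
  have hint' : Integrable (fun a => ψ a * φ (x - a)) μ :=
    (hψ.mul (by fun_prop)).integrable_of_hasCompactSupport hψc.mul_right
  simp_rw [mul_sub]
  rw [integral_sub (hint.mul_const _) hint', integral_mul_const_of_integrable hint]

theorem exists_sum_fderiv_eq_integral_mul_sub {ι E A : Type*} [Fintype ι] [NormedAddCommGroup E]
    [NormedSpace ℝ E] [MeasurableSpace E] [BorelSpace E] [NormedCommRing A] [NormedAlgebra ℝ A]
    [CompleteSpace A] {φ ψ : E → A} (b : Module.Basis ι ℝ E) (hφ : ContDiff ℝ ∞ φ)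
    (hφc : HasCompactSupport φ) (hψ : ContDiff ℝ ∞ ψ) (hψc : HasCompactSupport ψ)
    (μ : Measure E) [μ.IsAddHaarMeasure] :
    ∃ Φ : ι → E → A, (∀ i, ContDiff ℝ ∞ (Φ i) ∧ HasCompactSupport (Φ i)) ∧
      ∀ x, (∫ a, ψ a ∂μ) * φ x - (∫ a, φ a ∂μ) * ψ x = ∑ i, fderiv ℝ (Φ i) x (b i) := by
  have : FiniteDimensional ℝ E := b.finiteDimensional_of_finite
  have smooth {c φ : E → A} (hc : ContDiff ℝ ∞ c) (hcc : HasCompactSupport c)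
      (hφ : ContDiff ℝ ∞ φ) (hφc : HasCompactSupport φ) (i : ι) :
      ContDiff ℝ ∞ (homotopyOperator μ (fun a => b.coord i a • c a) φ) :=
    contDiff_homotopyOperator ((b.coord i).toContinuousLinearMap.contDiff.smul hc)
      (hcc.smul_left (f := b.coord i)) hφ hφc
  have compact {c φ : E → A} (hcc : HasCompactSupport c) (hφc : HasCompactSupport φ) (i : ι) :
      HasCompactSupport (homotopyOperator μ (fun a => b.coord i a • c a) φ) :=
    hasCompactSupport_homotopyOperator μ (hcc.smul_left (f := b.coord i)) hφc
  refine ⟨fun i => homotopyOperator μ (fun a => b.coord i a • ψ a) φ -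
    homotopyOperator μ (fun a => b.coord i a • φ a) ψ, fun i =>
    ⟨(smooth hψ hψc hφ hφc i).sub (smooth hφ hφc hψ hψc i),
      (compact hψc hφc i).sub (compact hφc hψc i)⟩, fun x => ?_⟩
  have hsub (i : ι) := fderiv_sub
    ((smooth hψ hψc hφ hφc i).differentiable (by simp) x)
    ((smooth hφ hφc hψ hψc i).differentiable (by simp) x)
  have one_le : (1 : WithTop ℕ∞) ≤ ∞ := mod_cast le_top
  simp only [hsub, sub_apply, Finset.sum_sub_distrib,
    sum_fderiv_homotopyOperator b (hψ.of_le one_le) hψc (hφ.of_le one_le) hφc,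
    sum_fderiv_homotopyOperator b (hφ.of_le one_le) hφc (hψ.of_le one_le) hψc,
    integral_mul_sub_comp_sub hφ.continuous hψ.continuous hψc,
    integral_mul_sub_comp_sub hψ.continuous hφ.continuous hφc, integral_mul_comp_sub φ ψ]
  abel

end Divergence

section PartialDeriv

variable {m : ℕ} {f g : EuclideanSpace ℝ (Fin m) → ℂ} {x : EuclideanSpace ℝ (Fin m)}

theorem partialDeriv_mul (hf : DifferentiableAt ℝ f x) (hg : DifferentiableAt ℝ g x) (i : Fin m) :
    partialDeriv (f * g) i x = f x * partialDeriv g i x + g x * partialDeriv f i x := by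
  simp [partialDeriv, fderiv_mul hf hg]

theorem partialDeriv_neg (f : EuclideanSpace ℝ (Fin m) → ℂ) (i : Fin m) :
    partialDeriv (-f) i = -partialDeriv f i := by
  ext x
  simp [partialDeriv, fderiv_neg]

theorem partialDeriv_const_mul (hf : DifferentiableAt ℝ f x) (c : ℂ) (i : Fin m) :
    partialDeriv (fun y => c * f y) i x = c * partialDeriv f i x := by
  simp [partialDeriv, fderiv_const_mul hf]

theorem partialDeriv_cexp (hf : DifferentiableAt ℝ f x) (i : Fin m) :
    partialDeriv (fun y => Complex.exp (f y)) i x = Complex.exp (f x) * partialDeriv f i x := by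
  simp [partialDeriv, hf.hasFDerivAt.cexp.fderiv]

theorem partialDeriv_ofReal_apply (i j : Fin m) (x : EuclideanSpace ℝ (Fin m)) :
    partialDeriv (fun y => (y j : ℂ)) i x = if i = j then 1 else 0 := by
  have hcoord : (fun y : EuclideanSpace ℝ (Fin m) => (y j : ℂ)) =
      Complex.ofRealCLM ∘L EuclideanSpace.proj j := rfl
  simp [partialDeriv, hcoord, ContinuousLinearMap.fderiv, eq_comm (a := i),
    apply_ite Complex.ofReal]

theorem partialDeriv_congr (h : f =ᶠ[𝓝 x] g) (i : Fin m) :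
    partialDeriv f i x = partialDeriv g i x := by
  rw [partialDeriv, partialDeriv, h.fderiv_eq]

theorem partialDeriv_eq_zero_of_notMem_tsupport (hx : x ∉ tsupport f) (i : Fin m) :
    partialDeriv f i x = 0 := by
  simp [partialDeriv, fderiv_of_notMem_tsupport (𝕜 := ℝ) hx]

end PartialDeriv

section PoissonBracket

variable {n : ℕ} {f f' g g' : EuclideanSpace ℝ (Fin (2 * n)) → ℂ}
  {x : EuclideanSpace ℝ (Fin (2 * n))}

theorem poissonBracket_mul_right (hg : DifferentiableAt ℝ g x) (hg' : DifferentiableAt ℝ g' x) :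
    poissonBracket f (g * g') x = g x * poissonBracket f g' x + g' x * poissonBracket f g x := by
  simp only [poissonBracket, partialDeriv_mul hg hg', Finset.mul_sum, ← Finset.sum_add_distrib]
  exact Finset.sum_congr rfl fun _ _ => by ring

theorem poissonBracket_const_mul_right (hg : DifferentiableAt ℝ g x) (c : ℂ) :
    poissonBracket f (fun y => c * g y) x = c * poissonBracket f g x := by
  simp only [poissonBracket, partialDeriv_const_mul hg, Finset.mul_sum]
  exact Finset.sum_congr rfl fun _ _ => by ring

theorem poissonBracket_cexp_right (hg : DifferentiableAt ℝ g x) :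
    poissonBracket f (fun y => Complex.exp (g y)) x =
      Complex.exp (g x) * poissonBracket f g x := by
  simp only [poissonBracket, partialDeriv_cexp hg, Finset.mul_sum]
  exact Finset.sum_congr rfl fun _ _ => by ring

theorem poissonBracket_cexp_mul_sub {H : EuclideanSpace ℝ (Fin (2 * n)) → ℂ} {β : ℂ}
    (hH : DifferentiableAt ℝ H x) (hg : DifferentiableAt ℝ g x) :
    poissonBracket f ((fun y => Complex.exp (β * H y)) * g) x -
        β * (Complex.exp (β * H x) * g x) * poissonBracket f H x =
      Complex.exp (β * H x) * poissonBracket f g x := by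
  rw [poissonBracket_mul_right (hH.const_mul β).cexp hg,
    poissonBracket_cexp_right (hH.const_mul β), poissonBracket_const_mul_right hH]
  ring

theorem poissonBracket_congr_left (h : f =ᶠ[𝓝 x] f') :
    poissonBracket f g x = poissonBracket f' g x := by
  simp only [poissonBracket, partialDeriv_congr h]

theorem poissonBracket_eq_zero_of_notMem_tsupport_right (hx : x ∉ tsupport g) :
    poissonBracket f g x = 0 := by
  simp [poissonBracket, partialDeriv_eq_zero_of_notMem_tsupport hx]

theorem poissonBracket_neg_left : poissonBracket (-f) g = -poissonBracket f g := by
  ext x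
  simp [poissonBracket, partialDeriv_neg, neg_add_eq_sub]

theorem poissonBracket_position_left (k : Fin n) (g : EuclideanSpace ℝ (Fin (2 * n)) → ℂ) :
    poissonBracket (fun y => (y ⟨k, by omega⟩ : ℂ)) g = partialDeriv g ⟨n + k, by omega⟩ := by
  ext x
  have hne (l : Fin n) : n + (l : ℕ) ≠ k := by omega
  simp [poissonBracket, partialDeriv_ofReal_apply, Fin.val_inj, hne]

theorem poissonBracket_momentum_left (k : Fin n) (g : EuclideanSpace ℝ (Fin (2 * n)) → ℂ) :
    poissonBracket (fun y => (y ⟨n + k, by omega⟩ : ℂ)) g = -partialDeriv g ⟨k, by omega⟩ := by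
  ext x
  have hne (l : Fin n) : (l : ℕ) ≠ n + k := by omega
  simp [poissonBracket, partialDeriv_ofReal_apply, Fin.val_inj, hne]

theorem exists_poissonBracket_eq_partialDeriv (j : Fin (2 * n)) :
    ∃ u : EuclideanSpace ℝ (Fin (2 * n)) → ℂ, ContDiff ℝ ∞ u ∧
      ∀ g, poissonBracket u g = partialDeriv g j := by
  have smooth (i : Fin (2 * n)) :
      ContDiff ℝ ∞ fun y : EuclideanSpace ℝ (Fin (2 * n)) => (y i : ℂ) :=
    (Complex.ofRealCLM ∘L EuclideanSpace.proj i).contDiff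
  rcases lt_or_ge (j : ℕ) n with hj | hj
  · refine ⟨_, (smooth ⟨n + j, by omega⟩).neg, fun g => ?_⟩
    exact poissonBracket_neg_left.trans (by rw [poissonBracket_momentum_left ⟨j, hj⟩, neg_neg])
  · refine ⟨_, smooth ⟨j - n, by omega⟩, fun g => ?_⟩
    rw [poissonBracket_position_left ⟨j - n, by omega⟩]
    simp [hj]

theorem exists_testFunction_poissonBracket_eq_partialDeriv (hg : HasCompactSupport g)
    (j : Fin (2 * n)) : ∃ f ∈ TestFunctions2 n, poissonBracket f g = partialDeriv g j := by
  obtain ⟨u, hu, hug⟩ := exists_poissonBracket_eq_partialDeriv (n := n) j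
  obtain ⟨R, hR, hgR⟩ := hg.isCompact.isBounded.subset_ball_lt 0 0
  let χ : ContDiffBump (0 : EuclideanSpace ℝ (Fin (2 * n))) := ⟨R, R + 1, hR, lt_add_one R⟩
  have hχ : ContDiff ℝ ∞ fun y => (χ y : ℂ) := Complex.ofRealCLM.contDiff.comp χ.contDiff
  have hχc : HasCompactSupport fun y => (χ y : ℂ) :=
    χ.hasCompactSupport.comp_left (g := Complex.ofReal) Complex.ofReal_zero
  refine ⟨fun y => χ y * u y, ⟨hχ.mul hu, hχc.mul_right (f' := u)⟩, funext fun x => ?_⟩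
  by_cases hx : x ∈ tsupport g
  · rw [← hug g]
    refine poissonBracket_congr_left ?_
    filter_upwards [χ.eventuallyEq_one_of_mem_ball (hgR hx)] with y hy
    simp [hy]
  · rw [poissonBracket_eq_zero_of_notMem_tsupport_right hx,
      partialDeriv_eq_zero_of_notMem_tsupport hx]

end PoissonBracket

section Functional

theorem exists_testFunction_integral_eq_one (n : ℕ) :
    ∃ ρ : TestFunctions2 n, ∫ x, (ρ : EuclideanSpace ℝ (Fin (2 * n)) → ℂ) x = 1 := by
  let χ : ContDiffBump (0 : EuclideanSpace ℝ (Fin (2 * n))) := default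
  refine ⟨⟨fun x => (χ.normed volume x : ℂ),
    Complex.ofRealCLM.contDiff.comp χ.contDiff_normed,
    χ.hasCompactSupport_normed.comp_left (g := Complex.ofReal) Complex.ofReal_zero⟩, ?_⟩
  rw [integral_complex_ofReal, χ.integral_normed, Complex.ofReal_one]

variable {n : ℕ}

theorem partialDeriv_mem_testFunctions2 {f : EuclideanSpace ℝ (Fin (2 * n)) → ℂ}
    (hf : f ∈ TestFunctions2 n) (i : Fin (2 * n)) : partialDeriv f i ∈ TestFunctions2 n :=
  ⟨(hf.1.fderiv_right le_rfl).clm_apply contDiff_const, hf.2.fderiv_apply (𝕜 := ℝ) _⟩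

theorem exists_eq_mul_integral_of_map_partialDeriv_eq_zero (ν : TestFunctions2 n →ₗ[ℂ] ℂ)
    (hν : ∀ (f : TestFunctions2 n) i, ν ⟨_, partialDeriv_mem_testFunctions2 f.2 i⟩ = 0) :
    ∃ c, ∀ f : TestFunctions2 n,
      ν f = c * ∫ x, (f : EuclideanSpace ℝ (Fin (2 * n)) → ℂ) x := by
  obtain ⟨ρ, hρ⟩ := exists_testFunction_integral_eq_one n
  refine ⟨ν ρ, fun f => ?_⟩
  obtain ⟨Φ, hΦ, hdiv⟩ := exists_sum_fderiv_eq_integral_mul_sub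
    (EuclideanSpace.basisFun _ ℝ).toBasis f.2.1 f.2.2 ρ.2.1 ρ.2.2 volume
  have hf : f = (∫ x, (f : EuclideanSpace ℝ (Fin (2 * n)) → ℂ) x) • ρ +
      ∑ i, (⟨_, partialDeriv_mem_testFunctions2 (hΦ i) i⟩ : TestFunctions2 n) := by
    ext x
    simpa [hρ, sub_eq_iff_eq_add', partialDeriv] using hdiv x
  have hsum : ν (∑ i, (⟨_, partialDeriv_mem_testFunctions2 (hΦ i) i⟩ : TestFunctions2 n)) = 0 :=
    (map_sum ν _ _).trans (Finset.sum_eq_zero fun i _ => hν ⟨Φ i, hΦ i⟩ i)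
  conv_lhs => rw [hf]
  rw [map_add, hsum, add_zero, map_smul, smul_eq_mul, mul_comm]

/-- Multiplication by a smooth function, as an endomorphism of `C_c^∞(ℝ^{2n})`. -/
noncomputable def smoothMul (a : EuclideanSpace ℝ (Fin (2 * n)) → ℂ) (ha : ContDiff ℝ ∞ a) :
    TestFunctions2 n →ₗ[ℂ] TestFunctions2 n :=
  (LinearMap.mulLeft ℂ a).restrict fun _ hf => ⟨ha.mul hf.1, hf.2.mul_left⟩

theorem smoothMul_apply (a : EuclideanSpace ℝ (Fin (2 * n)) → ℂ) (ha : ContDiff ℝ ∞ a)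
    (f : TestFunctions2 n) (x : EuclideanSpace ℝ (Fin (2 * n))) :
    (smoothMul a ha f : EuclideanSpace ℝ (Fin (2 * n)) → ℂ) x =
      a x * (f : EuclideanSpace ℝ (Fin (2 * n)) → ℂ) x :=
  rfl

end Functional

theorem static_classical_KMS_functional_is_Boltzmann_weighted_integral_general
    (n : ℕ) (H : EuclideanSpace ℝ (Fin (2 * n)) → ℂ) (hH : ContDiff ℝ ∞ H) (β : ℂ)
    (μ : TestFunctions2 n →ₗ[ℂ] ℂ)
    (hμ : ∀ f g h : TestFunctions2 n,
      (h : EuclideanSpace ℝ (Fin (2 * n)) → ℂ) =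
        (fun x => poissonBracket f g x - β * (g : EuclideanSpace ℝ (Fin (2 * n)) → ℂ) x *
          poissonBracket f H x) →
      μ h = 0) :
    ∃ c : ℂ, ∀ f : TestFunctions2 n,
      μ f = c * ∫ x, Complex.exp (-(β * H x)) *
        (f : EuclideanSpace ℝ (Fin (2 * n)) → ℂ) x := by
  have hexp : ContDiff ℝ ∞ fun y => Complex.exp (β * H y) := (contDiff_const.mul hH).cexp
  have hexp_neg : ContDiff ℝ ∞ fun y => Complex.exp (-(β * H y)) :=
    (contDiff_const.mul hH).neg.cexp
  obtain ⟨c, hc⟩ := exists_eq_mul_integral_of_map_partialDeriv_eq_zero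
    (μ ∘ₗ smoothMul _ hexp) fun g j => by
      obtain ⟨f, hf, hfg⟩ := exists_testFunction_poissonBracket_eq_partialDeriv g.2.2 j
      refine hμ ⟨f, hf⟩ (smoothMul _ hexp g) _ (funext fun x => ?_)
      exact (congrArg (Complex.exp (β * H x) * ·) (congrFun hfg x).symm).trans
        (poissonBracket_cexp_mul_sub (hH.differentiable (by simp) x)
          (g.2.1.differentiable (by simp) x)).symm
  refine ⟨c, fun f => ?_⟩
  have hf : f = smoothMul _ hexp (smoothMul _ hexp_neg f) := by
    ext x
    rw [smoothMul_apply, smoothMul_apply, ← mul_assoc, ← Complex.exp_add, add_neg_cancel,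
      Complex.exp_zero, one_mul]
  conv_lhs => rw [hf]
  exact hc (smoothMul _ hexp_neg f)

/-- For smooth real `H` and `β ∈ ℝ`, any `ℂ`-linear functional `μ₀` on
`C_c^∞(ℝ^{2n})` (no continuity assumed) satisfying the static classical KMS condition
`μ₀({f,g} − β·g·{f,H}) = 0` for all `f, g` is of the form
`μ₀(f) = c ∫ e^{−βH(x)} f(x) d^{2n}x` for some constant `c ∈ ℂ`. -/
theorem static_classical_KMS_functional_is_Boltzmann_weighted_integral
    (n : ℕ) (hn : 1 ≤ n)
    (H : EuclideanSpace ℝ (Fin (2 * n)) → ℝ) (hH : ContDiff ℝ (⊤ : ℕ∞) H)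
    (β : ℝ)
    (μ : TestFunctions2 n →ₗ[ℂ] ℂ)
    (hμ : ∀ (f g h : TestFunctions2 n),
      (h : EuclideanSpace ℝ (Fin (2 * n)) → ℂ) =
        (fun x =>
          poissonBracket (f : EuclideanSpace ℝ (Fin (2 * n)) → ℂ)
              (g : EuclideanSpace ℝ (Fin (2 * n)) → ℂ) x -
            (β : ℂ) * (g : EuclideanSpace ℝ (Fin (2 * n)) → ℂ) x *
              poissonBracket (f : EuclideanSpace ℝ (Fin (2 * n)) → ℂ)
                (fun y => (H y : ℂ)) x) →
      μ h = 0) :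
    ∃ c : ℂ, ∀ f : TestFunctions2 n,
      μ f = c * ∫ x, (Real.exp (-(β * H x)) : ℂ) *
        (f : EuclideanSpace ℝ (Fin (2 * n)) → ℂ) x := by
  simpa using static_classical_KMS_functional_is_Boltzmann_weighted_integral_general n
    (fun x => (H x : ℂ)) (Complex.ofRealCLM.contDiff.comp hH) β μ hμ
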